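/- Let τ > 0 and f : [0, τ] → ℝ be continuous with a flat boundary y(k) ≡ y₀. Then lim_{x → y₀⁺} ∫_0^τ f(k)·(x − y₀)/(2√(π(τ−k)³))·exp(−(x − y₀)²/(4(τ−k))) dk = f(τ), i.e., the double-layer heat potential with constant boundary has jump value equal to the density at time τ as x approaches the boundary from above. -/

import Mathlib

open Real Filter

lemma aux_subst (τ h : ℝ) (hτ : 0 < τ) (hh : 0 < h) (g : ℝ → ℝ) :
    ∫ k in Set.Ioo 0 τ, g k * h / (2 * Real.sqrt (π * (τ - k) ^ 3))
          * Real.exp (-h ^ 2 / (4 * (τ - k)))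
      = ∫ a in Set.Ioi (h / (2 * √τ)), g (τ - h ^ 2 / (4 * a ^ 2)) *
          (2 / √π * Real.exp (-1 * a ^ 2)) := by
  have hs : 0 < √τ := Real.sqrt_pos.2 hτ
  have hss : √τ ^ 2 = τ := Real.sq_sqrt hτ.le
  have hc : 0 < h / (2 * √τ) := by positivity
  have himg : (fun a : ℝ => τ - h ^ 2 / (4 * a ^ 2)) '' Set.Ioi (h / (2 * √τ)) = Set.Ioo 0 τ := by
    ext k
    simp only [Set.mem_image, Set.mem_Ioi, Set.mem_Ioo]
    constructor
    · rintro ⟨a, ha, rfl⟩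
      have ha0 : 0 < a := hc.trans ha
      have h1 : h < a * (2 * √τ) := (div_lt_iff₀ (by positivity)).1 ha
      have h2 : h ^ 2 < (a * (2 * √τ)) ^ 2 := by gcongr
      have h3 : h ^ 2 / (4 * a ^ 2) < τ := by
        rw [div_lt_iff₀ (by positivity)]
        rw [mul_pow, mul_pow, hss] at h2
        linarith
      have h4 : 0 < h ^ 2 / (4 * a ^ 2) := by positivity
      constructor <;> linarith
    · rintro ⟨h0, h1⟩
      have h2 : 0 < τ - k := by linarith
      have h3 : 0 < √(τ - k) := Real.sqrt_pos.2 h2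
      refine ⟨h / (2 * √(τ - k)), ?_, ?_⟩
      · have : √(τ - k) < √τ := Real.sqrt_lt_sqrt h2.le (by linarith)
        gcongr
      · have h4 : √(τ - k) ^ 2 = τ - k := Real.sq_sqrt h2.le
        have : h ^ 2 / (4 * (h / (2 * √(τ - k))) ^ 2) = √(τ - k) ^ 2 := by
          field_simp
          norm_num
        rw [this, h4]; ring
  have hder : ∀ a ∈ Set.Ioi (h / (2 * √τ)),
      HasDerivWithinAt (fun a : ℝ => τ - h ^ 2 / (4 * a ^ 2)) (h ^ 2 / (2 * a ^ 3))
        (Set.Ioi (h / (2 * √τ))) a := by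
    intro a ha
    have ha0 : 0 < a := hc.trans ha
    have h1 : HasDerivAt (fun a : ℝ => 4 * a ^ 2) (4 * (2 * a)) a := by
      simpa using (hasDerivAt_pow 2 a).const_mul 4
    have h2 := ((hasDerivAt_const a (h ^ 2)).div h1 (by positivity)).const_sub τ
    refine HasDerivAt.hasDerivWithinAt ?_
    convert h2 using 1
    · rfl
    · field_simp
      ring
  have hinj : Set.InjOn (fun a : ℝ => τ - h ^ 2 / (4 * a ^ 2)) (Set.Ioi (h / (2 * √τ))) := by
    intro a ha b hb hab
    have ha0 : 0 < a := hc.trans ha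
    have hb0 : 0 < b := hc.trans hb
    have h1 : h ^ 2 / (4 * a ^ 2) = h ^ 2 / (4 * b ^ 2) := by
      simp only at hab; linarith
    rw [div_eq_div_iff (by positivity) (by positivity)] at h1
    have h2 : b ^ 2 = a ^ 2 := by
      have : h ^ 2 * 4 ≠ 0 := by positivity
      apply mul_left_cancel₀ this
      linarith
    exact ((pow_left_inj₀ hb0.le ha0.le two_ne_zero).1 h2).symm
  rw [← himg, MeasureTheory.integral_image_eq_integral_abs_deriv_smul measurableSet_Ioi hder hinj]
  refine MeasureTheory.setIntegral_congr_fun measurableSet_Ioi ?_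
  intro a ha
  have ha0 : 0 < a := hc.trans ha
  have e1 : τ - (τ - h ^ 2 / (4 * a ^ 2)) = h ^ 2 / (4 * a ^ 2) := by ring
  have hp : 0 < √π := Real.sqrt_pos.2 Real.pi_pos
  have e2 : √(π * (h ^ 2 / (4 * a ^ 2)) ^ 3) = √π * (h / (2 * a)) ^ 3 := by
    rw [Real.sqrt_mul Real.pi_pos.le]
    congr 1
    rw [show (h ^ 2 / (4 * a ^ 2)) ^ 3 = ((h / (2 * a)) ^ 3) ^ 2 by field_simp; norm_num]
    exact Real.sqrt_sq (by positivity)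
  have e3 : -h ^ 2 / (4 * (h ^ 2 / (4 * a ^ 2))) = -1 * a ^ 2 := by
    field_simp
  have e4 : |h ^ 2 / (2 * a ^ 3)| = h ^ 2 / (2 * a ^ 3) := abs_of_pos (by positivity)
  simp only [e1, e2, e3, e4, smul_eq_mul]
  field_simp

theorem stmt_19 (τ y₀ : ℝ) (hτ : 0 < τ) (f : ℝ → ℝ) (hf : ContinuousOn f (Set.Icc 0 τ)) :
    Tendsto (fun x : ℝ => ∫ k in (0:ℝ)..τ,
        f k * (x - y₀) / (2 * Real.sqrt (π * (τ - k) ^ 3))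
          * Real.exp (-(x - y₀) ^ 2 / (4 * (τ - k))))
      (nhdsWithin y₀ (Set.Ioi y₀)) (nhds (f τ)) := by
  set g : ℝ → ℝ := Set.IccExtend hτ.le ((Set.Icc 0 τ).domRestrict f) with hg
  have hgc : Continuous g := (hf.domRestrict).Icc_extend'
  have hgf : ∀ k ∈ Set.Icc 0 τ, g k = f k := fun k hk => by
    rw [hg, Set.IccExtend_of_mem _ _ hk]; rfl
  obtain ⟨M, hM⟩ : ∃ M, ∀ k, ‖g k‖ ≤ M := by
    obtain ⟨M, hM⟩ := isCompact_Icc.exists_bound_of_continuousOn hf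
    refine ⟨M, fun k => ?_⟩
    exact hM _ (Set.projIcc 0 τ hτ.le k).2
  have hp : 0 < √π := Real.sqrt_pos.2 Real.pi_pos
  have hs : 0 < √τ := Real.sqrt_pos.2 hτ
  have hint : MeasureTheory.Integrable (fun a : ℝ => 2 / √π * Real.exp (-1 * a ^ 2)) :=
    (integrable_exp_neg_mul_sq one_pos).const_mul _
  have hval : ∫ a in Set.Ioi (0:ℝ), g τ * (2 / √π * Real.exp (-1 * a ^ 2)) = f τ := by
    rw [MeasureTheory.integral_const_mul, MeasureTheory.integral_const_mul, integral_gaussian_Ioi,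
      hgf τ ⟨hτ.le, le_rfl⟩, div_one]
    field_simp
  have key : Tendsto (fun x : ℝ => ∫ a in Set.Ioi (0:ℝ),
      (Set.Ioi ((x - y₀) / (2 * √τ))).indicator (fun a => g (τ - (x - y₀) ^ 2 / (4 * a ^ 2)) *
          (2 / √π * Real.exp (-1 * a ^ 2))) a) (nhdsWithin y₀ (Set.Ioi y₀)) (nhds (f τ)) := by
    rw [← hval]
    refine MeasureTheory.tendsto_integral_filter_of_dominated_convergence
      (fun a => M * (2 / √π * Real.exp (-1 * a ^ 2))) ?_ ?_ ?_ ?_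
    · refine Eventually.of_forall fun x => ?_
      refine Measurable.aestronglyMeasurable ?_
      refine Measurable.indicator ?_ measurableSet_Ioi
      refine Measurable.mul (hgc.measurable.comp ?_) ?_ <;> fun_prop
    · refine Eventually.of_forall fun x => Eventually.of_forall fun a => ?_
      refine (norm_indicator_le_norm_self _ _).trans ?_
      rw [norm_mul, Real.norm_of_nonneg (by positivity : 0 ≤ 2 / √π * Real.exp (-1 * a ^ 2))]
      exact mul_le_mul_of_nonneg_right (hM _) (by positivity)
    · exact (hint.const_mul M).integrableOn
    · refine (MeasureTheory.ae_restrict_iff' measurableSet_Ioi).2 (Eventually.of_forall ?_)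
      intro a ha
      have ha0 : (0:ℝ) < a := ha
      have hev : ∀ᶠ x in nhdsWithin y₀ (Set.Ioi y₀), (x - y₀) / (2 * √τ) < a := by
        have : Tendsto (fun x : ℝ => (x - y₀) / (2 * √τ)) (nhds y₀) (nhds ((y₀ - y₀) / (2 * √τ))) :=
          Continuous.tendsto (by fun_prop) _
        exact (this.mono_left nhdsWithin_le_nhds).eventually_lt_const (by simpa using ha0)
      have hlim : Tendsto (fun x : ℝ => g (τ - (x - y₀) ^ 2 / (4 * a ^ 2)) *
          (2 / √π * Real.exp (-1 * a ^ 2))) (nhds y₀)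
          (nhds (g (τ - (y₀ - y₀) ^ 2 / (4 * a ^ 2)) * (2 / √π * Real.exp (-1 * a ^ 2)))) :=
        Continuous.tendsto (f := fun x : ℝ => g (τ - (x - y₀) ^ 2 / (4 * a ^ 2)) *
          (2 / √π * Real.exp (-1 * a ^ 2)))
          ((hgc.comp (by fun_prop : Continuous fun x : ℝ => τ - (x - y₀) ^ 2 / (4 * a ^ 2))).mul
            continuous_const) y₀
      have hlim2 := hlim.mono_left (nhdsWithin_le_nhds (s := Set.Ioi y₀))
      rw [show τ - (y₀ - y₀) ^ 2 / (4 * a ^ 2) = τ by simp] at hlim2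
      refine hlim2.congr' ?_
      filter_upwards [hev] with x hx
      rw [Set.indicator_of_mem (show a ∈ Set.Ioi _ from hx)]
  refine key.congr' ?_
  filter_upwards [self_mem_nhdsWithin] with x hx
  have hh : 0 < x - y₀ := sub_pos.2 hx
  rw [MeasureTheory.setIntegral_indicator measurableSet_Ioi, Set.Ioi_inter_Ioi,
    sup_eq_right.2 (by positivity : 0 ≤ (x - y₀) / (2 * √τ)), ← aux_subst τ (x - y₀) hτ hh g,
    intervalIntegral.integral_of_le hτ.le, MeasureTheory.integral_Ioc_eq_integral_Ioo]
  refine MeasureTheory.setIntegral_congr_fun measurableSet_Ioo fun k hk => ?_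
  simp only [hgf k (Set.Ioo_subset_Icc_self hk)]
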